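/- Let n ≥ 1 and P_n = ℤ[X_1,…,X_n]. For each w ∈ S_n choose a reduced expression w = s_{i_1}⋯s_{i_r} (with r = r(w) the number of inversions of w) and set ∂_w = ∂_{i_1}∘⋯∘∂_{i_r}. Then the family (∂_w(X_2 X_3² ⋯ X_n^{n−1}))_{w ∈ S_n} is a basis of P_n as a module over the subring P_n^{S_n} of symmetric polynomials. -/

import Mathlib

open MvPolynomial

/-- The adjacent transposition `s i = (i, i+1)` in the symmetric group on `{1, …, n+1}`. -/
def adjTrans (n : ℕ) (i : Fin n) : Equiv.Perm (Fin (n + 1)) :=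
  Equiv.swap i.castSucc i.succ

/-- The number of inversions of a permutation `w` of `{1, …, n+1}`. -/
def inversions (n : ℕ) (w : Equiv.Perm (Fin (n + 1))) : ℕ :=
  (Finset.univ.filter fun p : Fin (n + 1) × Fin (n + 1) => p.1 < p.2 ∧ w p.2 < w p.1).card

/-!
The Demazure operators satisfy the braid relations and square to zero, so by Matsumoto's theorem
`∂_w` does not depend on the reduced expression, and `∂_v ∘ ∂_u` is `∂_{vu}` when
`ℓ(v) + ℓ(u) = ℓ(vu)` and `0` otherwise. Let `w₀` be the longest permutation and `δ` the staircase
monomial. Peeling off one variable at a time shows that some word of length `deg δ = ℓ(w₀)` in the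
`∂_i` sends `δ` to `1`; since its value is not `0` the word is a reduced expression of `w₀`, that is
`∂_{w₀} δ = 1`. Hence, as soon as `ℓ(v) ≤ ℓ(u)`, the value `∂_{w₀v⁻¹} ∂_u δ` is `1` if `u = v`
and `0` otherwise: the operators `∂_{w₀v⁻¹}` are a triangular dual family, and the `∂_u δ` are
independent.

They span because a polynomial killed by every `∂_i` is symmetric: if `∂_w P = 0` for all `w` longer
than `v`, then `∂_v P` is symmetric, and subtracting suitable multiples of the `∂_u δ` makes it
vanish for all `v` of a given length. Going down in length ends with `P = ∂_1 P = 0`.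
-/

/-! ### Descents and reduced expressions -/

section Inversions

variable {n : ℕ} {w : Equiv.Perm (Fin (n + 1))} {i j : Fin n}

/-- `i` is a left descent of `w` if the value `i + 1` occurs before the value `i` in the one-line
notation of `w`; by `isLeftDescent_iff_inversions_lt` this is the usual condition
`ℓ(s_i w) < ℓ(w)`. -/
def IsLeftDescent (w : Equiv.Perm (Fin (n + 1))) (i : Fin n) : Prop :=
  w⁻¹ i.succ < w⁻¹ i.castSucc

theorem not_isLeftDescent_iff : ¬ IsLeftDescent w i ↔ w⁻¹ i.castSucc < w⁻¹ i.succ := by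
  have hne : w⁻¹ i.castSucc ≠ w⁻¹ i.succ := w⁻¹.injective.ne i.castSucc_lt_succ.ne
  rw [IsLeftDescent, not_lt, hne.le_iff_lt]

theorem adjTrans_mul_inv_apply (x : Fin (n + 1)) :
    (adjTrans n i * w)⁻¹ x = w⁻¹ (adjTrans n i x) := by
  simp [adjTrans]

theorem adjTrans_mul_adjTrans_mul (i : Fin n) (w : Equiv.Perm (Fin (n + 1))) :
    adjTrans n i * (adjTrans n i * w) = w :=
  Equiv.swap_mul_self_mul _ _ _

theorem isLeftDescent_adjTrans_mul_self :
    IsLeftDescent (adjTrans n i * w) i ↔ ¬ IsLeftDescent w i := by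
  rw [not_isLeftDescent_iff, IsLeftDescent, adjTrans_mul_inv_apply, adjTrans_mul_inv_apply,
    adjTrans, Equiv.swap_apply_left, Equiv.swap_apply_right]

theorem isLeftDescent_adjTrans_mul_of_lt (hij : i.succ < j.castSucc) :
    IsLeftDescent (adjTrans n i * w) j ↔ IsLeftDescent w j := by
  have hi := i.castSucc_lt_succ
  have hj := j.castSucc_lt_succ
  rw [IsLeftDescent, adjTrans_mul_inv_apply, adjTrans_mul_inv_apply, adjTrans,
    Equiv.swap_apply_of_ne_of_ne (hi.trans (hij.trans hj)).ne' (hij.trans hj).ne',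
    Equiv.swap_apply_of_ne_of_ne (hi.trans hij).ne' hij.ne', IsLeftDescent]

theorem isLeftDescent_adjTrans_mul_of_eq (hij : i.succ = j.castSucc) (hi : IsLeftDescent w i)
    (hj : IsLeftDescent w j) : IsLeftDescent (adjTrans n i * w) j := by
  have hlt : i.succ < j.succ := hij ▸ j.castSucc_lt_succ
  rw [IsLeftDescent, adjTrans_mul_inv_apply, adjTrans_mul_inv_apply, ← hij, adjTrans,
    Equiv.swap_apply_right, Equiv.swap_apply_of_ne_of_ne (i.castSucc_lt_succ.trans hlt).ne' hlt.ne']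
  exact (hj.trans_eq (congrArg _ hij.symm)).trans hi

theorem isLeftDescent_adjTrans_mul_adjTrans_mul_of_eq (hij : i.succ = j.castSucc) :
    IsLeftDescent (adjTrans n j * (adjTrans n i * w)) i ↔ IsLeftDescent w j := by
  have hi := i.castSucc_lt_succ
  have hj : i.succ < j.succ := hij ▸ j.castSucc_lt_succ
  simp only [IsLeftDescent, adjTrans_mul_inv_apply]
  rw [adjTrans, adjTrans, ← hij, Equiv.swap_apply_left,
    Equiv.swap_apply_of_ne_of_ne hi.ne (hi.trans hj).ne, Equiv.swap_apply_left,
    Equiv.swap_apply_of_ne_of_ne (hi.trans hj).ne' hj.ne']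

theorem adjTrans_lt_adjTrans_iff {x y : Fin (n + 1)} :
    adjTrans n i x < adjTrans n i y ↔
      (x = i.succ ∧ y = i.castSucc) ∨ (x < y ∧ ¬ (x = i.castSucc ∧ y = i.succ)) := by
  simp only [adjTrans, Equiv.swap_apply_def]
  split_ifs <;> simp only [Fin.ext_iff, Fin.lt_def, Fin.val_castSucc, Fin.val_succ] at * <;> omega

theorem inversions_adjTrans_mul_of_not_isLeftDescent (hi : ¬ IsLeftDescent w i) :
    inversions n (adjTrans n i * w) = inversions n w + 1 := by
  rw [not_isLeftDescent_iff] at hi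
  unfold inversions
  rw [← Finset.card_insert_of_notMem (a := (w⁻¹ i.castSucc, w⁻¹ i.succ))
    (by simp [i.castSucc_lt_succ.le])]
  congr 1
  ext ⟨x, y⟩
  have hlt (hx : w x = i.castSucc) (hy : w y = i.succ) : x < y := by
    rwa [← hx, ← hy, Equiv.Perm.inv_def, w.symm_apply_apply, w.symm_apply_apply] at hi
  have hgt (hy : w y = i.castSucc) (hx : w x = i.succ) : y < x := by
    rwa [← hx, ← hy, Equiv.Perm.inv_def, w.symm_apply_apply, w.symm_apply_apply] at hi
  simp only [Finset.mem_insert, Finset.mem_filter_univ, Prod.mk.injEq, Equiv.Perm.mul_apply,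
    adjTrans_lt_adjTrans_iff, Equiv.Perm.eq_inv_iff_eq]
  grind

theorem inversions_adjTrans_mul_of_isLeftDescent (hi : IsLeftDescent w i) :
    inversions n (adjTrans n i * w) + 1 = inversions n w := by
  rw [← inversions_adjTrans_mul_of_not_isLeftDescent, adjTrans_mul_adjTrans_mul]
  rwa [isLeftDescent_adjTrans_mul_self, not_not]

theorem isLeftDescent_iff_inversions_lt :
    IsLeftDescent w i ↔ inversions n (adjTrans n i * w) < inversions n w := by
  by_cases hi : IsLeftDescent w i
  · simp [hi, ← inversions_adjTrans_mul_of_isLeftDescent hi]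
  · simp [hi, inversions_adjTrans_mul_of_not_isLeftDescent hi]

theorem inversions_one (n : ℕ) : inversions n 1 = 0 := by
  simp only [inversions, Finset.card_eq_zero, Finset.filter_eq_empty_iff]
  rintro p - ⟨h₁, h₂⟩
  exact lt_asymm h₁ h₂

theorem exists_isLeftDescent (hw : w ≠ 1) : ∃ i, IsLeftDescent w i := by
  by_contra! h
  have hmono : StrictMono ⇑w⁻¹ := Fin.strictMono_iff_lt_succ.mpr fun i =>
    not_isLeftDescent_iff.mp (h i)
  refine hw (inv_eq_one.mp (Equiv.coe_fn_injective ?_))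
  exact (hmono.range_inj strictMono_id).mp (by rw [w⁻¹.surjective.range_eq, Set.range_id])

theorem inversions_eq_zero_iff : inversions n w = 0 ↔ w = 1 := by
  refine ⟨fun h => ?_, fun h => h ▸ inversions_one n⟩
  by_contra hw
  obtain ⟨i, hi⟩ := exists_isLeftDescent hw
  exact (Nat.zero_le _).not_gt (h ▸ isLeftDescent_iff_inversions_lt.mp hi)

theorem inversions_inv (w : Equiv.Perm (Fin (n + 1))) : inversions n w⁻¹ = inversions n w := by
  refine Finset.card_nbij' (fun p => (w⁻¹ p.2, w⁻¹ p.1)) (fun p => (w p.2, w p.1)) ?_ ?_ ?_ ?_ <;>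
    intro p <;> simp +contextual

theorem inversions_revPerm (n : ℕ) :
    inversions n Fin.revPerm = ∑ i : Fin (n + 1), (i : ℕ) := by
  simp only [inversions, Fin.revPerm_apply, Fin.rev_lt_rev, and_self, Finset.card_filter,
    Fintype.sum_prod_type_right]
  refine Finset.sum_congr rfl fun y _ => ?_
  rw [← Finset.card_filter, Finset.filter_gt_eq_Iio, Fin.card_Iio]

theorem inversions_revPerm_mul_add (w : Equiv.Perm (Fin (n + 1))) :
    inversions n (Fin.revPerm * w) + inversions n w = inversions n Fin.revPerm := by
  have hrev : inversions n Fin.revPerm =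
      (Finset.univ.filter fun p : Fin (n + 1) × Fin (n + 1) => p.1 < p.2).card := by
    simp [inversions]
  have hlt (p : Fin (n + 1) × Fin (n + 1)) (hp : p.1 < p.2) : ¬ w p.1 < w p.2 ↔ w p.2 < w p.1 := by
    rw [not_lt, (w.injective.ne hp.ne').le_iff_lt]
  rw [hrev, ← Finset.card_filter_add_card_filter_not
    (fun p : Fin (n + 1) × Fin (n + 1) => w p.1 < w p.2), Finset.filter_filter,
    Finset.filter_filter, Finset.filter_congr fun p _ => and_congr_right (hlt p)]
  simp [inversions]

theorem eq_revPerm_of_inversions_le (h : inversions n Fin.revPerm ≤ inversions n w) :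
    w = Fin.revPerm := by
  have hrev : (Fin.revPerm : Equiv.Perm (Fin (n + 1)))⁻¹ = Fin.revPerm := Fin.revPerm_symm
  have hone : Fin.revPerm * w = 1 := by
    rw [← inversions_eq_zero_iff]
    have := inversions_revPerm_mul_add w
    omega
  rw [eq_inv_of_mul_eq_one_right hone, hrev]

/-- The word `a = [i₁, …, iᵣ]` is a reduced expression `w = s_{i₁} ⋯ s_{iᵣ}`. -/
def IsReducedExpr (a : List (Fin n)) (w : Equiv.Perm (Fin (n + 1))) : Prop :=
  (a.map (adjTrans n)).prod = w ∧ a.length = inversions n w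

theorem inversions_prod_map_adjTrans_le (a : List (Fin n)) :
    inversions n (a.map (adjTrans n)).prod ≤ a.length := by
  induction a with
  | nil => exact (inversions_one n).le
  | cons i a ih =>
    rw [List.map_cons, List.prod_cons, List.length_cons]
    by_cases hi : IsLeftDescent (a.map (adjTrans n)).prod i
    · have := inversions_adjTrans_mul_of_isLeftDescent hi
      omega
    · have := inversions_adjTrans_mul_of_not_isLeftDescent hi
      omega

theorem isReducedExpr_nil : IsReducedExpr ([] : List (Fin n)) 1 :=
  ⟨rfl, (inversions_one n).symm⟩

theorem isReducedExpr_cons_iff {a : List (Fin n)} :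
    IsReducedExpr (i :: a) w ↔ IsLeftDescent w i ∧ IsReducedExpr a (adjTrans n i * w) := by
  have hprod : ((i :: a).map (adjTrans n)).prod = w ↔
      (a.map (adjTrans n)).prod = adjTrans n i * w := by
    rw [List.map_cons, List.prod_cons, ← mul_right_inj (adjTrans n i),
      adjTrans_mul_adjTrans_mul]
  rw [IsReducedExpr, IsReducedExpr, hprod, and_left_comm]
  refine and_congr_right fun ha => ?_
  have hle := ha ▸ inversions_prod_map_adjTrans_le a
  rw [List.length_cons]
  by_cases hi : IsLeftDescent w i
  · simp [hi, ← inversions_adjTrans_mul_of_isLeftDescent hi]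
  · rw [inversions_adjTrans_mul_of_not_isLeftDescent hi] at hle
    simp only [hi, false_and, iff_false]
    omega

theorem exists_isReducedExpr (w : Equiv.Perm (Fin (n + 1))) :
    ∃ a : List (Fin n), IsReducedExpr a w := by
  induction hk : inversions n w generalizing w with
  | zero => exact ⟨[], inversions_eq_zero_iff.mp hk ▸ isReducedExpr_nil⟩
  | succ k ih =>
    obtain ⟨i, hi⟩ : ∃ i, IsLeftDescent w i := exists_isLeftDescent fun hw => by
      simp [hw, inversions_one] at hk
    obtain ⟨a, ha⟩ := ih (adjTrans n i * w) <| by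
      have := inversions_adjTrans_mul_of_isLeftDescent hi
      omega
    exact ⟨i :: a, isReducedExpr_cons_iff.mpr ⟨hi, ha⟩⟩

theorem IsReducedExpr.append_iff {v u : Equiv.Perm (Fin (n + 1))} {a b : List (Fin n)}
    (ha : IsReducedExpr a v) (hb : IsReducedExpr b u) :
    IsReducedExpr (a ++ b) (v * u) ↔ inversions n v + inversions n u = inversions n (v * u) := by
  rw [IsReducedExpr, List.map_append, List.prod_append, ha.1, hb.1, List.length_append, ha.2, hb.2,
    and_iff_right rfl]

end Inversions

/-! ### Braid relations and Matsumoto's theorem -/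

/-- The braid relations of the symmetric group for a family `E` indexed by its adjacent
transpositions: `E i` and `E j` commute when the transpositions are disjoint, and
`E i * E j * E i = E j * E i * E j` when they overlap, that is, when `j = i + 1`. -/
structure BraidRelations {n : ℕ} {M : Type*} [Monoid M] (E : Fin n → M) : Prop where
  comm : ∀ {i j : Fin n}, i.succ < j.castSucc → E i * E j = E j * E i
  braid : ∀ {i j : Fin n}, i.succ = j.castSucc → E i * E j * E i = E j * E i * E j

theorem swap_mul_swap_mul_swap_comm {σ : Type*} [DecidableEq σ] {a b c : σ} (hab : a ≠ b)
    (hac : a ≠ c) (hbc : b ≠ c) :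
    Equiv.swap a b * Equiv.swap b c * Equiv.swap a b =
      Equiv.swap b c * Equiv.swap a b * Equiv.swap b c := by
  rw [Equiv.swap_mul_swap_mul_swap hab hac, Equiv.swap_comm a b, Equiv.swap_comm b c,
    Equiv.swap_mul_swap_mul_swap hbc.symm hac.symm, Equiv.swap_comm]

theorem braidRelations_adjTrans (n : ℕ) : BraidRelations (adjTrans n) where
  comm {i j} hij := by
    refine (Equiv.Perm.disjoint_swap_swap ?_).commute
    have h₁ := i.castSucc_lt_succ
    have h₂ := j.castSucc_lt_succ
    simp [h₁.ne, hij.ne, h₂.ne, (h₁.trans hij).ne, (hij.trans h₂).ne, (h₁.trans (hij.trans h₂)).ne]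
  braid {i j} hij := by
    have h₁ := i.castSucc_lt_succ
    have h₂ : i.succ < j.succ := hij ▸ j.castSucc_lt_succ
    simpa only [adjTrans, hij] using
      swap_mul_swap_mul_swap_comm h₁.ne (h₁.trans h₂).ne h₂.ne

namespace BraidRelations

section Monoid

variable {n : ℕ} {M : Type*} [Monoid M] {E : Fin n → M} {w : Equiv.Perm (Fin (n + 1))}
  {a b : List (Fin n)} {i j : Fin n}

theorem prod_map_cons_comm (hE : BraidRelations E) (hij : i.succ < j.castSucc) :
    ((i :: j :: a).map E).prod = ((j :: i :: a).map E).prod := by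
  simp only [List.map_cons, List.prod_cons, ← mul_assoc, hE.comm hij]

theorem prod_map_cons_braid (hE : BraidRelations E) (hij : i.succ = j.castSucc) :
    ((i :: j :: i :: a).map E).prod = ((j :: i :: j :: a).map E).prod := by
  simp only [List.map_cons, List.prod_cons, ← mul_assoc, hE.braid hij]

theorem exists_isReducedExpr_cons_of_lt (hE : BraidRelations E) (hij : i < j)
    (hi : IsLeftDescent w i) (hj : IsLeftDescent w j) :
    ∃ a b : List (Fin n), IsReducedExpr (i :: a) w ∧ IsReducedExpr (j :: b) w ∧
      ((i :: a).map E).prod = ((j :: b).map E).prod := by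
  rcases (Fin.succ_le_castSucc_iff.mpr hij).lt_or_eq with hfar | hadj
  · obtain ⟨c, hc⟩ := exists_isReducedExpr (adjTrans n j * (adjTrans n i * w))
    have hred : IsReducedExpr (i :: j :: c) w :=
      isReducedExpr_cons_iff.mpr ⟨hi, isReducedExpr_cons_iff.mpr
        ⟨(isLeftDescent_adjTrans_mul_of_lt hfar).mpr hj, hc⟩⟩
    exact ⟨j :: c, i :: c, hred,
      ⟨((braidRelations_adjTrans n).prod_map_cons_comm hfar).symm.trans hred.1, hred.2⟩,
      hE.prod_map_cons_comm hfar⟩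
  · obtain ⟨c, hc⟩ := exists_isReducedExpr (adjTrans n i * (adjTrans n j * (adjTrans n i * w)))
    have hred : IsReducedExpr (i :: j :: i :: c) w :=
      isReducedExpr_cons_iff.mpr ⟨hi, isReducedExpr_cons_iff.mpr
        ⟨isLeftDescent_adjTrans_mul_of_eq hadj hi hj, isReducedExpr_cons_iff.mpr
          ⟨(isLeftDescent_adjTrans_mul_adjTrans_mul_of_eq hadj).mpr hj, hc⟩⟩⟩
    exact ⟨j :: i :: c, i :: j :: c, hred,
      ⟨((braidRelations_adjTrans n).prod_map_cons_braid hadj).symm.trans hred.1, hred.2⟩,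
      hE.prod_map_cons_braid hadj⟩

theorem prod_eq_of_isReducedExpr (hE : BraidRelations E) (ha : IsReducedExpr a w)
    (hb : IsReducedExpr b w) : (a.map E).prod = (b.map E).prod := by
  induction hk : a.length generalizing a b w with
  | zero =>
    have hlen : b.length = 0 := by rw [hb.2, ← ha.2, hk]
    rw [List.length_eq_zero_iff.mp hk, List.length_eq_zero_iff.mp hlen]
  | succ k ih =>
    have hlen : b.length = k + 1 := by rw [hb.2, ← ha.2, hk]
    obtain ⟨i, a, rfl⟩ := List.exists_cons_of_length_eq_add_one hk
    obtain ⟨j, b, rfl⟩ := List.exists_cons_of_length_eq_add_one hlen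
    have hcons {i : Fin n} {a c : List (Fin n)} (ha : IsReducedExpr (i :: a) w)
        (hc : IsReducedExpr (i :: c) w) (hk : (i :: a).length = k + 1) :
        ((i :: a).map E).prod = ((i :: c).map E).prod := by
      rw [List.map_cons, List.map_cons, List.prod_cons, List.prod_cons,
        ih (isReducedExpr_cons_iff.mp ha).2 (isReducedExpr_cons_iff.mp hc).2 (Nat.succ.inj hk)]
    have hi := (isReducedExpr_cons_iff.mp ha).1
    have hj := (isReducedExpr_cons_iff.mp hb).1
    rcases lt_trichotomy i j with hij | rfl | hij
    · obtain ⟨c, d, hc, hd, hcd⟩ := hE.exists_isReducedExpr_cons_of_lt hij hi hj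
      exact (hcons ha hc hk).trans (hcd.trans (hcons hb hd hlen).symm)
    · exact hcons ha hb hk
    · obtain ⟨c, d, hc, hd, hcd⟩ := hE.exists_isReducedExpr_cons_of_lt hij hj hi
      exact (hcons ha hd hk).trans (hcd.symm.trans (hcons hb hc hlen).symm)

end Monoid

end BraidRelations

/-- The product `E_w = E_{i₁} ⋯ E_{iᵣ}` along a reduced expression of `w`. The expression is an
arbitrary one; under the braid relations the product does not depend on it, see
`BraidRelations.prod_eq_reducedProd`. -/
noncomputable def reducedProd {n : ℕ} {M : Type*} [Monoid M] (E : Fin n → M)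
    (w : Equiv.Perm (Fin (n + 1))) : M :=
  ((exists_isReducedExpr w).choose.map E).prod

namespace BraidRelations

section Monoid

variable {n : ℕ} {M : Type*} [Monoid M] {E : Fin n → M} {w : Equiv.Perm (Fin (n + 1))}
  {a : List (Fin n)} {i : Fin n}

theorem prod_eq_reducedProd (hE : BraidRelations E) (ha : IsReducedExpr a w) :
    (a.map E).prod = reducedProd E w :=
  hE.prod_eq_of_isReducedExpr ha (exists_isReducedExpr w).choose_spec

theorem reducedProd_one (hE : BraidRelations E) : reducedProd E 1 = 1 :=
  (hE.prod_eq_reducedProd isReducedExpr_nil).symm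

theorem mul_reducedProd_of_isLeftDescent (hE : BraidRelations E) (hi : IsLeftDescent w i) :
    E i * reducedProd E (adjTrans n i * w) = reducedProd E w := by
  obtain ⟨a, ha⟩ := exists_isReducedExpr (adjTrans n i * w)
  rw [← hE.prod_eq_reducedProd ha, ← List.prod_cons, ← List.map_cons,
    hE.prod_eq_reducedProd (isReducedExpr_cons_iff.mpr ⟨hi, ha⟩)]

theorem reducedProd_mul_reducedProd (hE : BraidRelations E) {v u : Equiv.Perm (Fin (n + 1))}
    (h : inversions n v + inversions n u = inversions n (v * u)) :
    reducedProd E v * reducedProd E u = reducedProd E (v * u) := by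
  obtain ⟨a, ha⟩ := exists_isReducedExpr v
  obtain ⟨b, hb⟩ := exists_isReducedExpr u
  rw [← hE.prod_eq_reducedProd ha, ← hE.prod_eq_reducedProd hb, ← List.prod_append,
    ← List.map_append, hE.prod_eq_reducedProd ((ha.append_iff hb).mpr h)]

end Monoid

section MonoidWithZero

variable {n : ℕ} {M : Type*} [MonoidWithZero M] {E : Fin n → M} {w : Equiv.Perm (Fin (n + 1))}
  {a : List (Fin n)} {i : Fin n}

theorem mul_reducedProd_eq_zero (hE : BraidRelations E) (hsq : ∀ i, E i * E i = 0)
    (hi : IsLeftDescent w i) : E i * reducedProd E w = 0 := by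
  rw [← hE.mul_reducedProd_of_isLeftDescent hi, ← mul_assoc, hsq, zero_mul]

theorem prod_eq_zero_of_not_isReducedExpr (hE : BraidRelations E) (hsq : ∀ i, E i * E i = 0)
    (ha : ¬ IsReducedExpr a (a.map (adjTrans n)).prod) : (a.map E).prod = 0 := by
  induction a with
  | nil => exact absurd isReducedExpr_nil ha
  | cons i a ih =>
    rw [List.map_cons, List.prod_cons]
    by_cases hred : IsReducedExpr a (a.map (adjTrans n)).prod
    · have hi : IsLeftDescent (a.map (adjTrans n)).prod i := by
        by_contra hi
        refine ha (isReducedExpr_cons_iff.mpr ?_)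
        rw [List.map_cons, List.prod_cons, adjTrans_mul_adjTrans_mul,
          isLeftDescent_adjTrans_mul_self]
        exact ⟨hi, hred⟩
      rw [hE.prod_eq_reducedProd hred, hE.mul_reducedProd_eq_zero hsq hi]
    · rw [ih hred, mul_zero]

theorem reducedProd_mul_reducedProd_eq_zero (hE : BraidRelations E) (hsq : ∀ i, E i * E i = 0)
    {v u : Equiv.Perm (Fin (n + 1))}
    (h : inversions n v + inversions n u ≠ inversions n (v * u)) :
    reducedProd E v * reducedProd E u = 0 := by
  obtain ⟨a, ha⟩ := exists_isReducedExpr v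
  obtain ⟨b, hb⟩ := exists_isReducedExpr u
  rw [← hE.prod_eq_reducedProd ha, ← hE.prod_eq_reducedProd hb, ← List.prod_append,
    ← List.map_append]
  refine hE.prod_eq_zero_of_not_isReducedExpr hsq ?_
  rwa [List.map_append, List.prod_append, ha.1, hb.1, ha.append_iff hb]

end MonoidWithZero

end BraidRelations

/-! ### Demazure operators -/

theorem X_sub_X_mul_cancel {σ R : Type*} [CommRing R] {i j : σ} (hij : i ≠ j)
    {P Q : MvPolynomial σ R} (h : (X i - X j) * P = (X i - X j) * Q) : P = Q := by
  classical
  -- The substitution `X i ↦ X i + X j` turns `X i - X j` into the regular element `X i`.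
  let φ : MvPolynomial σ R →ₐ[R] MvPolynomial σ R := aeval (Function.update X i (X i + X j))
  let ψ : MvPolynomial σ R →ₐ[R] MvPolynomial σ R := aeval (Function.update X i (X i - X j))
  have hψφ : ψ.comp φ = AlgHom.id R _ := by
    ext1 k
    rcases eq_or_ne k i with rfl | hk
    · simp [φ, ψ, hij.symm]
    · simp [φ, ψ, hk]
  have hφ : φ (X i - X j) = X i := by simp [φ, hij.symm]
  have hφinj : Function.Injective φ :=
    Function.LeftInverse.injective (g := ψ) (DFunLike.congr_fun hψφ)
  refine hφinj ((isRegular_X (n := i)).left ?_)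
  simpa only [map_mul, hφ] using congrArg φ h

/-- `d` is the Demazure operator of the transposition `(a, b)`: it sends `P` to the quotient of
`P - (a, b) P` by `X b - X a`. -/
def IsDemazureOperator {σ R : Type*} [CommRing R] [DecidableEq σ] (a b : σ)
    (d : MvPolynomial σ R → MvPolynomial σ R) : Prop :=
  ∀ P, (X b - X a) * d P = P - rename (Equiv.swap a b) P

namespace IsDemazureOperator

variable {σ R : Type*} [CommRing R] [DecidableEq σ] {a b c e : σ}
  {d d' : MvPolynomial σ R → MvPolynomial σ R}

theorem neg_symm (hd : IsDemazureOperator a b d) : IsDemazureOperator b a fun P => -d P := by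
  intro P
  rw [Equiv.swap_comm]
  linear_combination hd P

theorem mul_rename_apply (hd : IsDemazureOperator a b d) (τ : Equiv.Perm σ)
    (P : MvPolynomial σ R) :
    (X (τ b) - X (τ a)) * rename τ (d P) =
      rename τ P - rename τ (rename (Equiv.swap a b) P) := by
  simpa only [map_mul, map_sub, rename_X] using congrArg (rename τ) (hd P)

theorem map_add (hd : IsDemazureOperator a b d) (hab : a ≠ b) (P Q : MvPolynomial σ R) :
    d (P + Q) = d P + d Q := by
  apply X_sub_X_mul_cancel hab.symm
  rw [hd, _root_.map_add]
  linear_combination -hd P - hd Q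

theorem map_mul_of_rename_eq (hd : IsDemazureOperator a b d) (hab : a ≠ b) {f : MvPolynomial σ R}
    (hf : rename (Equiv.swap a b) f = f) (P : MvPolynomial σ R) : d (f * P) = f * d P := by
  apply X_sub_X_mul_cancel hab.symm
  rw [hd, map_mul, hf]
  linear_combination -f * hd P

theorem map_neg (hd : IsDemazureOperator a b d) (hab : a ≠ b) (P : MvPolynomial σ R) :
    d (-P) = -d P := by
  simpa using hd.map_mul_of_rename_eq hab (f := -1) (by simp) P

theorem apply_X (hd : IsDemazureOperator a b d) (hab : a ≠ b) : d (X b) = 1 := by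
  apply X_sub_X_mul_cancel hab.symm
  rw [hd, rename_X, Equiv.swap_apply_right, mul_one]

theorem apply_eq_zero_iff (hd : IsDemazureOperator a b d) (hab : a ≠ b) {P : MvPolynomial σ R} :
    d P = 0 ↔ rename (Equiv.swap a b) P = P := by
  rw [eq_comm (b := P), ← sub_eq_zero (a := P), ← hd]
  exact ⟨fun h => by rw [h, mul_zero],
    fun h => X_sub_X_mul_cancel hab.symm (h.trans (mul_zero _).symm)⟩

theorem rename_apply (hd : IsDemazureOperator a b d) (hab : a ≠ b) (P : MvPolynomial σ R) :
    rename (Equiv.swap a b) (d P) = d P := by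
  apply X_sub_X_mul_cancel hab
  have h := hd.mul_rename_apply (Equiv.swap a b) P
  simp only [Equiv.swap_apply_left, Equiv.swap_apply_right, rename_rename,
    ← Equiv.Perm.coe_mul, Equiv.swap_mul_self, Equiv.Perm.coe_one, rename_id_apply] at h
  linear_combination h + hd P

theorem apply_apply (hd : IsDemazureOperator a b d) (hab : a ≠ b) (P : MvPolynomial σ R) :
    d (d P) = 0 :=
  (hd.apply_eq_zero_iff hab).mpr (hd.rename_apply hab P)

theorem apply_comm (hd : IsDemazureOperator a b d) (hd' : IsDemazureOperator c e d')
    (h : [a, b, c, e].Nodup) (P : MvPolynomial σ R) : d (d' P) = d' (d P) := by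
  have hne : a ≠ b ∧ a ≠ c ∧ a ≠ e ∧ b ≠ c ∧ b ≠ e ∧ c ≠ e := by simpa [and_assoc] using h
  obtain ⟨hab, hac, hae, hbc, hbe, hce⟩ := hne
  have hswap : rename (Equiv.swap a b) (rename (Equiv.swap c e) P) =
      rename (Equiv.swap c e) (rename (Equiv.swap a b) P) := by
    rw [rename_rename, rename_rename, ← Equiv.Perm.coe_mul, ← Equiv.Perm.coe_mul,
      (Equiv.Perm.disjoint_swap_swap h).commute.eq]
  have hsd' := hd'.mul_rename_apply (Equiv.swap a b) P
  have htd := hd.mul_rename_apply (Equiv.swap c e) P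
  rw [Equiv.swap_apply_of_ne_of_ne hac.symm hbc.symm,
    Equiv.swap_apply_of_ne_of_ne hae.symm hbe.symm, hswap] at hsd'
  rw [Equiv.swap_apply_of_ne_of_ne hac hae, Equiv.swap_apply_of_ne_of_ne hbc hbe] at htd
  apply X_sub_X_mul_cancel hab.symm
  apply X_sub_X_mul_cancel hce.symm
  linear_combination (X e - X c) * hd (d' P) - (X b - X a) * hd' (d P) + hd' P - hd P - hsd' + htd

/-- By the braid relation for the transpositions the right-hand side does not change when `(a, b)`
and `(b, c)` are exchanged; this is why the operators satisfy the braid relation as well. -/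
theorem vandermonde_mul_apply_apply_apply (hd : IsDemazureOperator a b d)
    (hd' : IsDemazureOperator b c d') (hab : a ≠ b) (hac : a ≠ c) (hbc : b ≠ c)
    (P : MvPolynomial σ R) :
    (X b - X a) * (X c - X a) * (X c - X b) * d (d' (d P)) =
      P - rename (Equiv.swap a b) P - rename (Equiv.swap b c) P
        + rename (Equiv.swap a b) (rename (Equiv.swap b c) P)
        + rename (Equiv.swap b c) (rename (Equiv.swap a b) P)
        - rename (Equiv.swap a b * Equiv.swap b c * Equiv.swap a b : Equiv.Perm σ) P := by
  have hsd' := hd'.mul_rename_apply (Equiv.swap a b) (d P)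
  have htd := hd.mul_rename_apply (Equiv.swap b c) P
  have hstd := hd.mul_rename_apply (Equiv.swap a b * Equiv.swap b c) P
  rw [Equiv.swap_apply_right, Equiv.swap_apply_of_ne_of_ne hac.symm hbc.symm,
    hd.rename_apply hab] at hsd'
  rw [Equiv.swap_apply_left, Equiv.swap_apply_of_ne_of_ne hab hac] at htd
  rw [Equiv.Perm.mul_apply, Equiv.Perm.mul_apply, Equiv.swap_apply_left,
    Equiv.swap_apply_of_ne_of_ne hab hac, Equiv.swap_apply_left,
    Equiv.swap_apply_of_ne_of_ne hac.symm hbc.symm] at hstd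
  simp only [Equiv.Perm.coe_mul, ← rename_rename] at hstd ⊢
  linear_combination (X c - X a) * (X c - X b) * hd (d' (d P)) + (X c - X a) * hd' (d P)
    - (X c - X b) * hsd' + hd P - htd + hstd

theorem apply_braid (hd : IsDemazureOperator a b d) (hd' : IsDemazureOperator b c d') (hab : a ≠ b)
    (hac : a ≠ c) (hbc : b ≠ c) (P : MvPolynomial σ R) : d (d' (d P)) = d' (d (d' P)) := by
  have h := hd.vandermonde_mul_apply_apply_apply hd' hab hac hbc P
  have h' := hd'.neg_symm.vandermonde_mul_apply_apply_apply hd.neg_symm hbc.symm hac.symm hab.symm P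
  simp only [hd.map_neg hab, neg_neg, Equiv.swap_comm c b, Equiv.swap_comm b a,
    ← swap_mul_swap_mul_swap_comm hab hac hbc] at h'
  apply X_sub_X_mul_cancel hab.symm
  apply X_sub_X_mul_cancel hac.symm
  apply X_sub_X_mul_cancel hbc.symm
  linear_combination h - h'

theorem apply_prod_X_pow [Fintype σ] (hd : IsDemazureOperator a b d) (hab : a ≠ b) {m : σ → ℕ}
    (hm : m a = m b) : d (∏ j, X j ^ (m + Pi.single b 1 : σ → ℕ) j) = ∏ j, X j ^ m j := by
  have hsymm : rename (Equiv.swap a b) (∏ j, (X j : MvPolynomial σ R) ^ m j) =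
      ∏ j, X j ^ m j := by
    rw [map_prod, ← Equiv.prod_comp (Equiv.swap a b)]
    refine Finset.prod_congr rfl fun j _ => ?_
    rw [map_pow, rename_X, Equiv.swap_apply_self, Equiv.swap_apply_def]
    split_ifs with hja hjb <;> simp [*]
  have hmul : ∏ j, (X j : MvPolynomial σ R) ^ (m + Pi.single b 1 : σ → ℕ) j =
      (∏ j, X j ^ m j) * X b := by
    simp only [Pi.add_apply, pow_add, Finset.prod_mul_distrib]
    simp [Pi.single_apply]
  rw [hmul, hd.map_mul_of_rename_eq hab hsymm, hd.apply_X hab, mul_one]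

/-- A Demazure operator as an endomorphism over the ring of symmetric polynomials. -/
def toEnd (hd : IsDemazureOperator a b d) (hab : a ≠ b) :
    Module.End (symmetricSubalgebra σ R) (MvPolynomial σ R) where
  toFun := d
  map_add' := hd.map_add hab
  map_smul' f P := hd.map_mul_of_rename_eq hab (f.2 _) P

end IsDemazureOperator

/-- The Demazure operators `∂_i` of the adjacent transpositions, as endomorphisms over the ring of
symmetric polynomials. -/
def demazureEnd {n : ℕ} {R : Type*} [CommRing R]
    {D : Fin n → MvPolynomial (Fin (n + 1)) R → MvPolynomial (Fin (n + 1)) R}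
    (hD : ∀ i, IsDemazureOperator i.castSucc i.succ (D i)) (i : Fin n) :
    Module.End (symmetricSubalgebra (Fin (n + 1)) R) (MvPolynomial (Fin (n + 1)) R) :=
  (hD i).toEnd i.castSucc_lt_succ.ne

section Demazure

variable {n : ℕ} {R : Type*} [CommRing R]
  {D : Fin n → MvPolynomial (Fin (n + 1)) R → MvPolynomial (Fin (n + 1)) R}

theorem isSymmetric_of_forall_apply_eq_zero
    (hD : ∀ i, IsDemazureOperator i.castSucc i.succ (D i)) {P : MvPolynomial (Fin (n + 1)) R}
    (hP : ∀ i, D i P = 0) : P.IsSymmetric := by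
  intro w
  obtain ⟨a, rfl, -⟩ := exists_isReducedExpr w
  induction a with
  | nil => simp
  | cons i a ih =>
    rw [List.map_cons, List.prod_cons, Equiv.Perm.coe_mul, ← rename_rename, ih]
    exact ((hD i).apply_eq_zero_iff i.castSucc_lt_succ.ne).mp (hP i)

variable (hD : ∀ i, IsDemazureOperator i.castSucc i.succ (D i))

theorem demazureEnd_mul_self (i : Fin n) : demazureEnd hD i * demazureEnd hD i = 0 :=
  LinearMap.ext ((hD i).apply_apply i.castSucc_lt_succ.ne)

theorem braidRelations_demazureEnd : BraidRelations (demazureEnd hD) where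
  comm {i j} hij := by
    have hi := i.castSucc_lt_succ
    have hj := j.castSucc_lt_succ
    refine LinearMap.ext ((hD i).apply_comm (hD j) ?_)
    simp [hi.ne, hij.ne, hj.ne, (hi.trans hij).ne, (hij.trans hj).ne, (hi.trans (hij.trans hj)).ne]
  braid {i j} hij := by
    have hi := i.castSucc_lt_succ
    have hj : i.succ < j.succ := hij ▸ j.castSucc_lt_succ
    exact LinearMap.ext
      ((hD i).apply_braid (hij ▸ hD j) hi.ne (hi.trans hj).ne hj.ne)

theorem prod_map_demazureEnd_apply (a : List (Fin n)) (P : MvPolynomial (Fin (n + 1)) R) :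
    (a.map (demazureEnd hD)).prod P = a.foldr (fun i P => D i P) P := by
  induction a with
  | nil => rfl
  | cons i a ih => rw [List.map_cons, List.prod_cons, Module.End.mul_apply, ih]; rfl

end Demazure

/-! ### The staircase monomial -/

theorem exists_last_ascent {n : ℕ} {m : Fin (n + 1) → ℕ} (h₀ : m 0 = 0)
    (hm : ∀ i : Fin n, m i.succ ≤ m i.castSucc + 1) (hne : m ≠ 0) :
    ∃ i : Fin n, m i.succ = m i.castSucc + 1 ∧ ∀ j, i < j → m j.succ ≤ m j.castSucc := by
  have hasc : (Finset.univ.filter fun i : Fin n => m i.castSucc < m i.succ).Nonempty := by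
    by_contra! h
    simp only [Finset.filter_eq_empty_iff, Finset.mem_univ, not_lt, true_implies] at h
    have hanti : Antitone m := Fin.antitone_iff_succ_le.mpr fun i => @h i
    exact hne (funext fun j => Nat.le_zero.mp (h₀ ▸ hanti (Fin.zero_le j)))
  obtain ⟨i, hi, hmax⟩ := Finset.exists_max_image _ id hasc
  refine ⟨i, (hm i).antisymm ((Finset.mem_filter_univ i).mp hi), fun j hij => ?_⟩
  by_contra! hj
  exact (hmax j ((Finset.mem_filter_univ j).mpr hj)).not_gt hij

section Staircase

variable {n : ℕ} {R : Type*} [CommRing R]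
  {D : Fin n → MvPolynomial (Fin (n + 1)) R → MvPolynomial (Fin (n + 1)) R}
  (hD : ∀ i, IsDemazureOperator i.castSucc i.succ (D i))

theorem exists_prod_map_demazureEnd_apply_eq_one {m : Fin (n + 1) → ℕ} (h₀ : m 0 = 0)
    (hm : ∀ i : Fin n, m i.succ ≤ m i.castSucc + 1) :
    ∃ a : List (Fin n), a.length = ∑ j, m j ∧
      (a.map (demazureEnd hD)).prod (∏ j, X j ^ m j) = 1 := by
  induction hk : ∑ j, m j generalizing m with
  | zero =>
    have hz : ∀ j, m j = 0 := by simpa using hk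
    exact ⟨[], rfl, by simp [hz]⟩
  | succ k ih =>
    obtain ⟨i, hi, hlast⟩ := exists_last_ascent h₀ hm fun h => by simp [h] at hk
    have hle : Pi.single i.succ 1 ≤ m := fun j => by
      rcases eq_or_ne j i.succ with rfl | hj <;> simp [*]
    obtain ⟨m, rfl⟩ : ∃ m', m = m' + Pi.single i.succ 1 :=
      ⟨m - Pi.single i.succ 1, (tsub_add_cancel_of_le hle).symm⟩
    have hi_eq : m i.castSucc = m i.succ := by
      simpa [i.castSucc_lt_succ.ne, eq_comm] using hi
    have hsum : ∑ j, m j = k := by simpa [Finset.sum_add_distrib] using hk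
    have hle_add : m ≤ m + Pi.single i.succ 1 := le_self_add
    have hm' (j : Fin n) : m j.succ ≤ m j.castSucc + 1 := by
      rcases lt_or_ge i j with hij | hji
      · refine (hle_add _).trans ((hlast j hij).trans (Nat.add_le_add_left ?_ _))
        rw [Pi.single_apply]
        split_ifs <;> simp
      · refine (hle_add _).trans ((hm j).trans_eq ?_)
        simp [(Fin.castSucc_lt_succ_iff.mpr hji).ne]
    obtain ⟨a, ha, ha_one⟩ := ih (by simpa [(Fin.succ_ne_zero i).symm] using h₀) hm' hsum
    refine ⟨a ++ [i], by rw [List.length_append, ha, List.length_singleton], ?_⟩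
    rw [List.map_append, List.prod_append, Module.End.mul_apply, List.map_singleton,
      List.prod_singleton]
    exact (congrArg _ ((hD i).apply_prod_X_pow i.castSucc_lt_succ.ne hi_eq)).trans ha_one

theorem reducedProd_revPerm_demazureEnd_apply :
    reducedProd (demazureEnd hD) Fin.revPerm (∏ j : Fin (n + 1), X j ^ (j : ℕ)) = 1 := by
  cases subsingleton_or_nontrivial R
  · exact Subsingleton.elim _ _
  obtain ⟨b, hlen, hb⟩ := exists_prod_map_demazureEnd_apply_eq_one hD
    (m := fun j : Fin (n + 1) => (j : ℕ)) rfl (by simp)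
  have hE := braidRelations_demazureEnd hD
  have hred : IsReducedExpr b (b.map (adjTrans n)).prod := by
    by_contra h
    rw [hE.prod_eq_zero_of_not_isReducedExpr (demazureEnd_mul_self hD) h,
      LinearMap.zero_apply] at hb
    exact zero_ne_one hb
  have hrev : (b.map (adjTrans n)).prod = Fin.revPerm :=
    eq_revPerm_of_inversions_le (by rw [← hred.2, hlen, inversions_revPerm])
  rw [← hE.prod_eq_reducedProd (hrev ▸ hred), hb]

end Staircase

/-! ### Triangular dual families -/

section Triangular

variable {S M N ι κ : Type*} [Ring S] [AddCommGroup M] [Module S M] [AddCommGroup N] [Module S N]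
  {φ : ι → M →ₗ[S] N} {b : ι → M} {e : N}

theorem linearIndependent_of_triangular [DecidableEq ι] [LinearOrder κ] (ht : ι → κ)
    (he : ∀ c : S, c • e = 0 → c = 0)
    (hφ : ∀ u v, ht u ≤ ht v → φ v (b u) = if u = v then e else 0) : LinearIndependent S b := by
  classical
  rw [linearIndependent_iff']
  by_contra! h
  obtain ⟨s, g, hg, i, hi, hgi⟩ := h
  obtain ⟨v, hv, hmax⟩ := Finset.exists_max_image (s.filter (g · ≠ 0)) ht
    ⟨i, Finset.mem_filter.mpr ⟨hi, hgi⟩⟩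
  obtain ⟨hvs, hgv⟩ := Finset.mem_filter.mp hv
  refine hgv (he _ ?_)
  have hsum := congrArg (φ v) hg
  rw [map_sum, map_zero, Finset.sum_eq_single_of_mem v hvs] at hsum
  · rwa [map_smul, hφ v v le_rfl, if_pos rfl] at hsum
  · intro u hu huv
    by_cases hgu : g u = 0
    · rw [hgu, zero_smul, map_zero]
    · rw [map_smul, hφ u v (hmax u (Finset.mem_filter.mpr ⟨hu, hgu⟩)), if_neg huv, smul_zero]

theorem span_range_eq_top_of_triangular [Finite ι] [DecidableEq ι] (ht : ι → ℕ)
    (hφ : ∀ u v, ht u ≤ ht v → φ v (b u) = if u = v then e else 0)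
    (hmem : ∀ v x, (∀ w, ht v < ht w → φ w x = 0) → ∃ c : S, c • e = φ v x)
    (hinj : ∀ x, (∀ v, φ v x = 0) → x = 0) : Submodule.span S (Set.range b) = ⊤ := by
  cases nonempty_fintype ι
  have hspan (k : ℕ) (x : M) (hx : ∀ v, k ≤ ht v → φ v x = 0) :
      x ∈ Submodule.span S (Set.range b) := by
    induction k generalizing x with
    | zero => exact hinj x (fun v => hx v (Nat.zero_le _)) ▸ zero_mem _
    | succ k ih =>
      have hc (v : ι) : ∃ c : S, ht v = k → c • e = φ v x := by
        by_cases hv : ht v = k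
        · obtain ⟨c, hc⟩ := hmem v x fun w hw => hx w (hv ▸ hw)
          exact ⟨c, fun _ => hc⟩
        · exact ⟨0, fun h => absurd h hv⟩
      choose c hc using hc
      set y := ∑ u with ht u = k, c u • b u with hy
      have hy_mem : y ∈ Submodule.span S (Set.range b) := sum_mem fun u _ =>
        Submodule.smul_mem _ _ (Submodule.subset_span (Set.mem_range_self u))
      have hφy (v : ι) (hv : k ≤ ht v) : φ v y = if ht v = k then c v • e else 0 := by
        have hterm (u : ι) (hu : u ∈ Finset.univ.filter (ht · = k)) :
            φ v (c u • b u) = if u = v then c u • e else 0 := by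
          rw [map_smul, hφ u v ((Finset.mem_filter_univ u).mp hu ▸ hv), smul_ite, smul_zero]
        rw [hy, map_sum, Finset.sum_congr rfl hterm, Finset.sum_ite_eq']
        simp only [Finset.mem_filter_univ]
      rw [← sub_add_cancel x y]
      refine add_mem (ih _ fun v hv => ?_) hy_mem
      rw [map_sub, hφy v hv]
      split_ifs with hvk
      · rw [hc v hvk, sub_self]
      · rw [hx v (by omega), sub_zero]
  refine Submodule.eq_top_iff'.mpr fun x => hspan (Finset.univ.sup ht + 1) x fun v hv => ?_
  exact absurd (Finset.le_sup (f := ht) (Finset.mem_univ v)) (by omega)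

end Triangular

/-! ### The staircase basis -/

section StaircaseBasis

variable {n : ℕ} {R : Type*} [CommRing R]
  {D : Fin n → MvPolynomial (Fin (n + 1)) R → MvPolynomial (Fin (n + 1)) R}
  (hD : ∀ i, IsDemazureOperator i.castSucc i.succ (D i))

theorem reducedProd_demazureEnd_mul_apply {u v : Equiv.Perm (Fin (n + 1))}
    (h : inversions n Fin.revPerm ≤ inversions n v + inversions n u) :
    (reducedProd (demazureEnd hD) v * reducedProd (demazureEnd hD) u)
      (∏ j : Fin (n + 1), X j ^ (j : ℕ)) = if v * u = Fin.revPerm then 1 else 0 := by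
  have hE := braidRelations_demazureEnd hD
  by_cases hadd : inversions n v + inversions n u = inversions n (v * u)
  · have hrev : v * u = Fin.revPerm := eq_revPerm_of_inversions_le (hadd ▸ h)
    rw [hE.reducedProd_mul_reducedProd hadd, hrev, reducedProd_revPerm_demazureEnd_apply,
      if_pos rfl]
  · have hne : v * u ≠ Fin.revPerm := fun hvu => hadd <| by
      rw [hvu, ← inversions_revPerm_mul_add u⁻¹, ← hvu, mul_inv_cancel_right, inversions_inv]
    rw [hE.reducedProd_mul_reducedProd_eq_zero (demazureEnd_mul_self hD) hadd,
      LinearMap.zero_apply, if_neg hne]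

theorem reducedProd_demazureEnd_dual {u v : Equiv.Perm (Fin (n + 1))}
    (h : inversions n (Fin.revPerm * u⁻¹) ≤ inversions n (Fin.revPerm * v⁻¹)) :
    reducedProd (demazureEnd hD) (Fin.revPerm * v⁻¹)
      (reducedProd (demazureEnd hD) u (∏ j : Fin (n + 1), X j ^ (j : ℕ))) =
        if u = v then 1 else 0 := by
  rw [← Module.End.mul_apply, reducedProd_demazureEnd_mul_apply]
  · simp only [mul_assoc, mul_eq_left, inv_mul_eq_one, eq_comm (a := v)]
  · rw [← inversions_revPerm_mul_add u⁻¹, inversions_inv]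
    exact Nat.add_le_add_right h _

theorem isSymmetric_reducedProd_demazureEnd_apply {v : Equiv.Perm (Fin (n + 1))}
    {P : MvPolynomial (Fin (n + 1)) R}
    (hP : ∀ w, inversions n v < inversions n w → reducedProd (demazureEnd hD) w P = 0) :
    (reducedProd (demazureEnd hD) v P).IsSymmetric := by
  have hE := braidRelations_demazureEnd hD
  refine isSymmetric_of_forall_apply_eq_zero hD fun i => ?_
  change (demazureEnd hD i * reducedProd (demazureEnd hD) v) P = 0
  by_cases hi : IsLeftDescent v i
  · rw [hE.mul_reducedProd_eq_zero (demazureEnd_mul_self hD) hi, LinearMap.zero_apply]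
  · have hmul := hE.mul_reducedProd_of_isLeftDescent (isLeftDescent_adjTrans_mul_self.mpr hi)
    rw [adjTrans_mul_adjTrans_mul] at hmul
    rw [hmul]
    exact hP _ (by rw [inversions_adjTrans_mul_of_not_isLeftDescent hi]; exact Nat.lt_succ_self _)

theorem linearIndependent_reducedProd_demazureEnd :
    LinearIndependent (symmetricSubalgebra (Fin (n + 1)) R) fun w =>
      reducedProd (demazureEnd hD) w (∏ j : Fin (n + 1), X j ^ (j : ℕ)) := by
  refine linearIndependent_of_triangular (fun w => inversions n (Fin.revPerm * w⁻¹))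
    (φ := fun w => reducedProd (demazureEnd hD) (Fin.revPerm * w⁻¹)) (e := 1) (fun c hc => ?_)
    fun u v h => reducedProd_demazureEnd_dual hD h
  rw [Subalgebra.smul_def, smul_eq_mul, mul_one] at hc
  exact Subtype.ext hc

theorem span_range_reducedProd_demazureEnd_eq_top :
    Submodule.span (symmetricSubalgebra (Fin (n + 1)) R) (Set.range fun w =>
      reducedProd (demazureEnd hD) w (∏ j : Fin (n + 1), X j ^ (j : ℕ))) = ⊤ := by
  have hsurj (w : Equiv.Perm (Fin (n + 1))) : Fin.revPerm * (w⁻¹ * Fin.revPerm)⁻¹ = w := by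
    rw [mul_inv_rev, mul_inv_cancel_left, inv_inv]
  refine span_range_eq_top_of_triangular (fun w => inversions n (Fin.revPerm * w⁻¹))
    (φ := fun w => reducedProd (demazureEnd hD) (Fin.revPerm * w⁻¹)) (e := 1)
    (fun u v h => reducedProd_demazureEnd_dual hD h) (fun v P hP => ?_) fun P hP => ?_
  · have hsymm := isSymmetric_reducedProd_demazureEnd_apply hD fun w hw =>
      hsurj w ▸ hP (w⁻¹ * Fin.revPerm) ((hsurj w).symm ▸ hw)
    exact ⟨⟨_, hsymm⟩, mul_one _⟩
  · have hone := hP Fin.revPerm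
    rwa [mul_inv_cancel, (braidRelations_demazureEnd hD).reducedProd_one] at hone

end StaircaseBasis

theorem demazure_staircase_basis_general {R : Type*} [CommRing R] (n : ℕ)
    (D : Fin n → MvPolynomial (Fin (n + 1)) R → MvPolynomial (Fin (n + 1)) R)
    (hD : ∀ (i : Fin n) (P : MvPolynomial (Fin (n + 1)) R),
      (X i.succ - X i.castSucc) * D i P =
        P - rename (Equiv.swap i.castSucc i.succ) P)
    (l : Equiv.Perm (Fin (n + 1)) → List (Fin n))
    (hred : ∀ w, ((l w).map (adjTrans n)).prod = w ∧ (l w).length = inversions n w) :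
    LinearIndependent (symmetricSubalgebra (Fin (n + 1)) R)
      (fun w : Equiv.Perm (Fin (n + 1)) =>
        (l w).foldr (fun i P => D i P) (∏ i : Fin (n + 1), X i ^ (i : ℕ))) ∧
    Submodule.span (symmetricSubalgebra (Fin (n + 1)) R)
      (Set.range fun w : Equiv.Perm (Fin (n + 1)) =>
        (l w).foldr (fun i P => D i P) (∏ i : Fin (n + 1), X i ^ (i : ℕ))) = ⊤ := by
  have hl (w : Equiv.Perm (Fin (n + 1))) (P : MvPolynomial (Fin (n + 1)) R) :
      (l w).foldr (fun i P => D i P) P = reducedProd (demazureEnd hD) w P := by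
    rw [← prod_map_demazureEnd_apply hD,
      (braidRelations_demazureEnd hD).prod_eq_reducedProd (hred w)]
  simp only [hl]
  exact ⟨linearIndependent_reducedProd_demazureEnd hD,
    span_range_reducedProd_demazureEnd_eq_top hD⟩

/-- Choosing for each `w ∈ S_{n+1}` a reduced expression `w = s_{i_1} ⋯ s_{i_r}`
(`r = r(w)` the number of inversions) and letting `∂_w = ∂_{i_1} ∘ ⋯ ∘ ∂_{i_r}` be the
corresponding composite of Demazure operators, the family `(∂_w(X_2 X_3² ⋯ X_{n+1}^n))_w`
is a basis of `ℤ[X_1, …, X_{n+1}]` as a module over the subring of symmetric polynomials. -/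
theorem demazure_staircase_basis (n : ℕ)
    (D : Fin n → MvPolynomial (Fin (n + 1)) ℤ →ₗ[ℤ] MvPolynomial (Fin (n + 1)) ℤ)
    (hD : ∀ (i : Fin n) (P : MvPolynomial (Fin (n + 1)) ℤ),
      (X i.succ - X i.castSucc) * D i P =
        P - rename (Equiv.swap i.castSucc i.succ) P)
    (l : Equiv.Perm (Fin (n + 1)) → List (Fin n))
    (hred : ∀ w, ((l w).map (adjTrans n)).prod = w ∧ (l w).length = inversions n w) :
    LinearIndependent (symmetricSubalgebra (Fin (n + 1)) ℤ)
      (fun w : Equiv.Perm (Fin (n + 1)) =>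
        (l w).foldr (fun i P => D i P) (∏ i : Fin (n + 1), X i ^ (i : ℕ))) ∧
    Submodule.span (symmetricSubalgebra (Fin (n + 1)) ℤ)
      (Set.range fun w : Equiv.Perm (Fin (n + 1)) =>
        (l w).foldr (fun i P => D i P) (∏ i : Fin (n + 1), X i ^ (i : ℕ))) = ⊤ :=
  demazure_staircase_basis_general n (fun i => D i) hD l hred
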